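/- arXiv:1103.3893 — 2 statements merged into one kernel-verified Lean document; each statement's English description precedes it below -/
import Mathlib

section
/- The integral $\int_0^\pi \log^4(2\sin(\theta/2))\,d\theta = \frac{19}{240}\pi^5$. -/
/-!
Write `L z = log (1 - z)`. For `‖z‖ = r < 1` one has `conj (L z) = -∫ t in 0..r², dt / (z - t)`,
so by Cauchy's formula the average of `z * g z * conj (L z)` over the circle of radius `r` is
`-∫ t in 0..r², g t` for every holomorphic `g`. For `g z = L z ^ n / z`, letting `r → 1` gives
`-∫ t in 0..1, L t ^ n / t`, and the substitution `t = 1 - exp (-x)` turns this into the Mellin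
transform of `1 / (exp x - 1)`, that is, into `(-1) ^ (n + 1) * n! * ζ (n + 1)`. The passage to the
limit is dominated because `L` has only a logarithmic singularity at `1`.

For `n = 3` the real part of `L ^ 3 * conj L` is `log ‖1 - z‖ ^ 4 - arg (1 - z) ^ 4`; on the unit
circle `‖1 - exp (iθ)‖ = 2 sin (θ / 2)` and `arg (1 - exp (iθ)) = (θ - π) / 2`, so the integral
differs from `π * 6 * ζ 4` by that of the polynomial `((θ - π) / 2) ^ 4`.
-/

open Real

section

open Set Filter Topology MeasureTheory Metric
open scoped ComplexConjugate Nat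

theorem one_sub_mem_slitPlane {z : ℂ} (hz : ‖z‖ ≤ 1) (hz1 : z ≠ 1) :
    1 - z ∈ Complex.slitPlane := by
  by_contra h
  obtain ⟨hre, him⟩ : 1 ≤ z.re ∧ z.im = 0 := by simpa [Complex.mem_slitPlane_iff] using h
  exact hz1 (Complex.ext (le_antisymm ((Complex.re_le_norm z).trans hz) hre) him)

theorem conj_log_one_sub_eq_neg_integral {z : ℂ} (hz : ‖z‖ < 1) :
    conj (Complex.log (1 - z)) = -∫ t in (0 : ℝ)..‖z‖ ^ 2, (z - t)⁻¹ := by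
  rcases eq_or_ne z 0 with rfl | hz0
  · simp
  have slit {w : ℂ} (hw : ‖w‖ < 1) : 1 - w ∈ Complex.slitPlane :=
    one_sub_mem_slitPlane hw.le (by rintro rfl; simp at hw)
  have slit_conj : 1 - conj z ∈ Complex.slitPlane := slit (by simpa using hz)
  calc conj (Complex.log (1 - z))
    _ = -Complex.log (1 - conj z)⁻¹ := by
      rw [← Complex.log_conj _ (Complex.slitPlane_arg_ne_pi (slit hz)),
        Complex.log_inv _ (Complex.slitPlane_arg_ne_pi slit_conj), neg_neg, map_sub, map_one]
    _ = -∫ t in (0 : ℝ)..1, conj z * (1 - t • conj z)⁻¹ := by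
      rw [Complex.log_inv_eq_integral slit_conj, intervalIntegral.integral_const_mul]
    _ = -∫ t in (0 : ℝ)..1, ‖z‖ ^ 2 • (z - (‖z‖ ^ 2 * t : ℝ))⁻¹ := by
      have factor (t : ℝ) : z - (‖z‖ ^ 2 * t : ℝ) = z * (1 - t • conj z) := by
        push_cast
        rw [← Complex.mul_conj', Complex.real_smul]
        ring
      simp_rw [factor, mul_inv, Complex.real_smul, Complex.ofReal_pow, ← Complex.mul_conj']
      field_simp
    _ = -∫ t in (0 : ℝ)..‖z‖ ^ 2, (z - t)⁻¹ := by
      rw [intervalIntegral.integral_smul, intervalIntegral.smul_integral_comp_mul_left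
        (fun t : ℝ ↦ (z - t)⁻¹), mul_zero, mul_one]

theorem circleAverage_intervalIntegral_swap {E : Type*} [NormedAddCommGroup E] [NormedSpace ℝ E]
    {f : ℂ → ℝ → E} {c : ℂ} {R a b : ℝ}
    (hf : ContinuousOn f.uncurry (sphere c |R| ×ˢ uIcc a b)) :
    circleAverage (fun z ↦ ∫ t in a..b, f z t) c R = ∫ t in a..b, circleAverage (f · t) c R := by
  simp only [circleAverage_def, intervalIntegral.integral_smul]
  rw [intervalIntegral_intervalIntegral_swap]
  refine ContinuousOn.integrableOn_compact (isCompact_uIcc.prod isCompact_uIcc) ?_ |>.mono_set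
    (prod_mono uIoc_subset_uIcc uIoc_subset_uIcc)
  exact hf.comp (f := Prod.map (circleMap c R) id) (by fun_prop) fun p hp ↦
    ⟨circleMap_mem_sphere' c R p.1, hp.2⟩

theorem circleAverage_mul_conj_log_one_sub {g : ℂ → ℂ} {r : ℝ} (hr : |r| < 1)
    (hg : DiffContOnCl ℂ g (ball 0 |r|)) :
    circleAverage (fun z ↦ z * g z * conj (Complex.log (1 - z))) 0 r =
      -∫ t in (0 : ℝ)..r ^ 2, g t := by
  rcases eq_or_ne r 0 with rfl | hr0
  · simp
  have lt_abs {t : ℝ} (ht : t ∈ uIcc 0 (r ^ 2)) : ‖(t : ℂ)‖ < |r| := by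
    rw [uIcc_of_le (sq_nonneg r)] at ht
    rw [Complex.norm_of_nonneg ht.1]
    nlinarith [ht.2, sq_abs r, abs_pos.2 hr0]
  have kernel {z : ℂ} (hz : z ∈ sphere 0 |r|) :
      z * g z * conj (Complex.log (1 - z)) = -∫ t in (0 : ℝ)..r ^ 2, z / (z - t) * g z := by
    rw [mem_sphere_zero_iff_norm] at hz
    rw [conj_log_one_sub_eq_neg_integral (hz ▸ hr), hz, sq_abs, mul_neg,
      ← intervalIntegral.integral_const_mul]
    simp_rw [div_eq_mul_inv, mul_right_comm]
  have kernel_continuousOn : ContinuousOn (fun p : ℂ × ℝ ↦ p.1 / (p.1 - p.2) * g p.1)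
      (sphere 0 |r| ×ˢ uIcc 0 (r ^ 2)) := by
    refine (continuousOn_fst.div (by fun_prop) fun p hp h ↦ ?_).mul
      (hg.continuousOn_ball.comp continuousOn_fst fun p hp ↦ sphere_subset_closedBall hp.1)
    have := lt_abs hp.2
    rw [← sub_eq_zero.1 h, mem_sphere_zero_iff_norm.1 hp.1] at this
    exact this.false
  calc circleAverage (fun z ↦ z * g z * conj (Complex.log (1 - z))) 0 r
    _ = -circleAverage (fun z ↦ ∫ t in (0 : ℝ)..r ^ 2, z / (z - t) * g z) 0 r := by
      rw [circleAverage_congr_sphere fun z hz ↦ kernel hz]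
      simp only [circleAverage_def, intervalIntegral.integral_neg, smul_neg]
    _ = -∫ t in (0 : ℝ)..r ^ 2, circleAverage (fun z ↦ z / (z - t) * g z) 0 r := by
      rw [circleAverage_intervalIntegral_swap (f := fun z t ↦ z / (z - t) * g z)
        kernel_continuousOn]
    _ = -∫ t in (0 : ℝ)..r ^ 2, g t := by
      congr 1
      refine intervalIntegral.integral_congr fun t ht ↦ ?_
      simpa using hg.circleAverage_smul_div (mem_ball_zero_iff.2 (lt_abs ht))

theorem hasSum_exp_neg_nat_add_one_mul {t : ℝ} (ht : 0 < t) :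
    HasSum (fun n : ℕ ↦ rexp (-(n + 1 : ℕ) * t)) (rexp t - 1)⁻¹ := by
  have h := (hasSum_geometric_of_lt_one (exp_pos (-t)).le (by simpa using ht)).mul_left (rexp (-t))
  have hsum : rexp (-t) * (1 - rexp (-t))⁻¹ = (rexp t - 1)⁻¹ := by
    rw [exp_neg, ← mul_inv, mul_sub, mul_one, mul_inv_cancel₀ (exp_pos t).ne']
  rw [hsum] at h
  refine h.congr_fun fun n ↦ ?_
  rw [← exp_nat_mul, ← exp_add]
  push_cast
  ring_nf

theorem mellin_inv_exp_sub_one {s : ℂ} (hs : 1 < s.re) :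
    mellin (fun t ↦ (((rexp t - 1)⁻¹ : ℝ) : ℂ)) s = Complex.Gamma s * riemannZeta s := by
  have hsum : Summable fun n : ℕ ↦ ‖(1 : ℂ)‖ / ((n + 1 : ℕ) : ℝ) ^ s.re := by
    simpa using (summable_nat_add_iff 1).2 (summable_one_div_nat_rpow.2 hs)
  have hgeom (t : ℝ) (ht : t ∈ Ioi 0) : HasSum (fun n : ℕ ↦ (1 : ℂ) * rexp (-(n + 1 : ℕ) * t))
      ((rexp t - 1)⁻¹ : ℝ) := by
    simpa only [one_mul] using Complex.hasSum_ofReal.2 (hasSum_exp_neg_nat_add_one_mul ht)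
  have h := hasSum_mellin (fun n ↦ .inr (by positivity)) (zero_lt_one.trans hs) hgeom hsum
  rw [zeta_eq_tsum_one_div_nat_add_one_cpow hs, ← tsum_mul_left, ← h.tsum_eq]
  simp [div_eq_mul_inv]

theorem image_one_sub_exp_neg_Ioi : (fun x ↦ 1 - rexp (-x)) '' Ioi 0 = Ioo 0 1 := by
  ext t
  constructor
  · rintro ⟨x, hx, rfl⟩
    exact ⟨by simpa using hx, by simpa using exp_pos (-x)⟩
  · intro ht
    refine ⟨-log (1 - t), neg_pos.2 (log_neg (by linarith [ht.2]) (by linarith [ht.1])), ?_⟩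
    simp [exp_log (sub_pos.2 ht.2)]

theorem integral_log_one_sub_pow_div {n : ℕ} (hn : n ≠ 0) :
    ∫ t in (0 : ℝ)..1, Complex.log (1 - t) ^ n / t = (-1) ^ n * n ! * riemannZeta (n + 1) := by
  have hre : 1 < ((n : ℂ) + 1).re := by simpa using Nat.pos_of_ne_zero hn
  have hderiv (x : ℝ) : HasDerivAt (fun x ↦ 1 - rexp (-x)) (rexp (-x)) x := by
    simpa using (hasDerivAt_neg x).exp.const_sub 1
  have hinj : InjOn (fun x ↦ 1 - rexp (-x)) (Ioi 0) := fun x _ y _ h ↦ by simpa using h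
  have hlog (x : ℝ) : Complex.log (1 - (1 - rexp (-x) : ℝ)) = -x := by
    rw [← Complex.ofReal_one, ← Complex.ofReal_sub, sub_sub_cancel,
      ← Complex.ofReal_log (exp_pos _).le, log_exp, Complex.ofReal_neg]
  rw [intervalIntegral.integral_of_le zero_le_one, integral_Ioc_eq_integral_Ioo,
    ← image_one_sub_exp_neg_Ioi, integral_image_eq_integral_abs_deriv_smul measurableSet_Ioi
      (fun x _ ↦ (hderiv x).hasDerivWithinAt) hinj, mul_assoc, ← Complex.Gamma_nat_eq_factorial,
    ← mellin_inv_exp_sub_one hre]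
  unfold mellin
  rw [← integral_const_mul]
  refine setIntegral_congr_fun measurableSet_Ioi fun x hx ↦ ?_
  have hx1 : rexp x - 1 ≠ 0 := (sub_pos.2 (one_lt_exp_iff.2 hx)).ne'
  have hweight : rexp (-x) / (1 - rexp (-x)) = (rexp x - 1)⁻¹ := by
    rw [exp_neg]
    field_simp
  simp only [hlog, ← hweight, abs_of_pos (exp_pos (-x)), Complex.real_smul, smul_eq_mul,
    add_sub_cancel_right, Complex.cpow_natCast, neg_pow (x : ℂ)]
  push_cast
  ring

theorem intervalIntegrable_log_one_sub_pow_div {n : ℕ} (hn : n ≠ 0) :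
    IntervalIntegrable (fun t : ℝ ↦ Complex.log (1 - t) ^ n / t) volume 0 1 := by
  refine intervalIntegral.intervalIntegrable_of_integral_ne_zero ?_
  rw [integral_log_one_sub_pow_div hn]
  exact mul_ne_zero (by simp [Nat.factorial_ne_zero])
    (riemannZeta_ne_zero_of_one_lt_re (by simpa using Nat.pos_of_ne_zero hn))

theorem circleAverage_log_one_sub_pow_mul_conj_of_lt_one {n : ℕ} (hn : n ≠ 0) {r : ℝ}
    (hr : |r| < 1) :
    circleAverage (fun z ↦ Complex.log (1 - z) ^ n * conj (Complex.log (1 - z))) 0 r =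
      -∫ t in (0 : ℝ)..r ^ 2, Complex.log (1 - t) ^ n / t := by
  set g : ℂ → ℂ := dslope (fun z ↦ Complex.log (1 - z) ^ n) 0
  have hg_diff : DifferentiableOn ℂ g (ball 0 1) := by
    refine (Complex.differentiableOn_dslope (ball_mem_nhds 0 one_pos)).2 ?_
    refine (DifferentiableOn.clog (by fun_prop) fun z hz ↦ ?_).pow n
    have hz1 := mem_ball_zero_iff.1 hz
    exact one_sub_mem_slitPlane hz1.le (by rintro rfl; simp at hz1)
  have hg_mul (z : ℂ) : z * g z = Complex.log (1 - z) ^ n := by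
    simpa [hn] using sub_smul_dslope (fun z ↦ Complex.log (1 - z) ^ n) 0 z
  simp_rw [← hg_mul]
  rw [circleAverage_mul_conj_log_one_sub hr
    (hg_diff.diffContOnCl_ball (closedBall_subset_ball hr))]
  congr 1
  refine intervalIntegral.integral_congr_ae (ae_of_all _ fun t ht ↦ ?_)
  rw [uIoc_of_le (sq_nonneg r)] at ht
  symm
  rw [mul_div_cancel_left₀]
  exact_mod_cast ht.1.ne'

theorem norm_one_sub_circleMap (θ : ℝ) : ‖1 - circleMap 0 1 θ‖ = |2 * sin (θ / 2)| := by
  have h := Complex.norm_exp_I_mul_ofReal_sub_one θ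
  rwa [norm_sub_rev, mul_comm Complex.I, ← one_mul (Complex.exp _), ← Complex.ofReal_one,
    ← circleMap_zero, Real.norm_eq_abs] at h

theorem arg_one_sub_circleMap {θ : ℝ} (hθ : θ ∈ Ioo 0 (2 * π)) :
    (1 - circleMap 0 1 θ).arg = (θ - π) / 2 := by
  have hsin : 0 < sin (θ / 2) := sin_pos_of_pos_of_lt_pi (by linarith [hθ.1]) (by linarith [hθ.2])
  have polar : 1 - circleMap 0 1 θ = (2 * sin (θ / 2) : ℝ) *
      (Complex.cos ((θ - π) / 2 : ℝ) + Complex.sin ((θ - π) / 2 : ℝ) * Complex.I) := by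
    rw [circleMap_zero, Complex.ofReal_one, one_mul, Complex.exp_mul_I, sub_div,
      ← Complex.ofReal_cos, ← Complex.ofReal_sin, ← Complex.ofReal_cos, ← Complex.ofReal_sin,
      cos_sub_pi_div_two, sin_sub_pi_div_two]
    nth_rw 1 2 [← mul_div_cancel₀ θ (two_ne_zero' ℝ)]
    rw [cos_two_mul', cos_sq', sin_two_mul]
    push_cast
    ring
  rw [polar, Complex.arg_mul_cos_add_sin_mul_I (by positivity)
    ⟨by linarith [hθ.1, pi_pos], by linarith [hθ.2, pi_pos]⟩]

theorem two_div_pi_mul_abs_le_norm_one_sub_circleMap {θ : ℝ} (hθ : |θ| ≤ π) :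
    2 / π * |θ| ≤ ‖1 - circleMap 0 1 θ‖ := by
  have half : |θ / 2| = |θ| / 2 := by rw [abs_div, Nat.abs_ofNat]
  calc 2 / π * |θ| = 2 * (2 / π * |θ / 2|) := by rw [half]; ring
    _ ≤ 2 * |sin (θ / 2)| := by
      gcongr
      exact mul_abs_le_abs_sin (by rw [half]; gcongr)
    _ = ‖1 - circleMap 0 1 θ‖ := by rw [norm_one_sub_circleMap, abs_mul, Nat.abs_ofNat]

theorem circleIntegrable_norm_one_sub_rpow {s : ℝ} (hs : -1 < s) :
    CircleIntegrable (fun z ↦ ‖1 - z‖ ^ s) 0 1 := by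
  rcases le_total 0 s with hs0 | hs0
  · exact (Continuous.rpow_const (by fun_prop) fun _ ↦ .inr hs0).continuousOn.circleIntegrable'
  have even_integrable : IntervalIntegrable (fun θ ↦ (2 / π * |θ|) ^ s) volume (-π) π := by
    refine intervalIntegrable_of_even (by simp) fun x hx ↦ ?_
    refine ((intervalIntegral.intervalIntegrable_rpow' hs).const_mul ((2 / π) ^ s)).congr
      fun θ hθ ↦ ?_
    rw [uIoc_of_le hx.le] at hθ
    rw [abs_of_pos hθ.1, mul_rpow (by positivity) hθ.1.le]
  have period_integrable :
      IntervalIntegrable (fun θ ↦ ‖1 - circleMap 0 1 θ‖ ^ s) volume (-π) (-π + 2 * π) := by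
    rw [show -π + 2 * π = π by ring]
    refine even_integrable.mono_fun' (Measurable.aestronglyMeasurable ?_) <|
      (ae_restrict_mem measurableSet_uIoc).mono fun θ hθ ↦ ?_
    · exact Measurable.pow_const (f := fun θ ↦ ‖1 - circleMap 0 1 θ‖)
        (Continuous.measurable (by fun_prop)) s
    beta_reduce
    rw [uIoc_of_le (by linarith [pi_pos])] at hθ
    rw [norm_rpow_of_nonneg (norm_nonneg _), norm_norm]
    rcases eq_or_ne θ 0 with rfl | hθ0
    · simp [circleMap_zero]
    exact rpow_le_rpow_of_nonpos (by positivity)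
      (two_div_pi_mul_abs_le_norm_one_sub_circleMap (abs_le.2 ⟨hθ.1.le, hθ.2⟩)) hs0
  exact ((periodic_circleMap 0 1).comp fun z ↦ ‖1 - z‖ ^ s).intervalIntegrable two_pi_pos.ne'
    period_integrable 0 (2 * π)

theorem ae_circleMap_ne {c : ℂ} {R : ℝ} (hR : R ≠ 0) (w : ℂ) :
    ∀ᵐ θ : ℝ, circleMap c R θ ≠ w :=
  ((countable_singleton w).preimage_circleMap c hR).ae_notMem volume

theorem norm_one_sub_le_two_mul_norm_one_sub_mul {z : ℂ} (hz : ‖z‖ ≤ 1) {r : ℝ} (hr : r ∈ Icc 0 1) :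
    ‖1 - z‖ ≤ 2 * ‖1 - r * z‖ := by
  have hrz : ‖r * z‖ ≤ r := by
    rw [norm_mul, Complex.norm_of_nonneg hr.1]
    exact mul_le_of_le_one_right hr.1 hz
  have hgap : ‖(1 - r) * z‖ ≤ 1 - r := by
    rw [norm_mul, ← Complex.ofReal_one, ← Complex.ofReal_sub,
      Complex.norm_of_nonneg (sub_nonneg.2 hr.2)]
    exact mul_le_of_le_one_right (sub_nonneg.2 hr.2) hz
  calc ‖1 - z‖ = ‖(1 - r * z) - (1 - r) * z‖ := by ring_nf
    _ ≤ ‖1 - r * z‖ + (1 - r) := (norm_sub_le _ _).trans (by gcongr)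
    _ ≤ 2 * ‖1 - r * z‖ := by
      have := norm_sub_norm_le 1 (r * z)
      rw [norm_one] at this
      linarith

theorem exp_norm_log_one_sub_le {z : ℂ} (hz : ‖z‖ ≤ 1) (hz1 : z ≠ 1) {r : ℝ}
    (hr : r ∈ Icc 0 1) :
    rexp ‖Complex.log (1 - r * z)‖ ≤ 4 * rexp π / ‖1 - z‖ := by
  have hpos : 0 < ‖1 - z‖ := norm_pos_iff.2 (sub_ne_zero.2 hz1.symm)
  have lower := norm_one_sub_le_two_mul_norm_one_sub_mul hz hr
  have norm_le_two {w : ℂ} (hw : ‖w‖ ≤ 1) : ‖1 - w‖ ≤ 2 := by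
    linarith [norm_sub_le 1 w, norm_one (α := ℂ)]
  have upper : ‖1 - r * z‖ ≤ 2 := norm_le_two <| by
    rw [norm_mul, Complex.norm_of_nonneg hr.1]
    exact mul_le_one₀ hr.2 (norm_nonneg z) hz
  have hpos' : 0 < ‖1 - r * z‖ := by linarith
  have abs_log_le : |log ‖1 - r * z‖| ≤ log (4 / ‖1 - z‖) := by
    rw [abs_le', ← log_inv]
    constructor <;> refine log_le_log (by positivity) ?_
    · rw [le_div_iff₀ hpos]
      nlinarith [norm_le_two hz]
    · rw [inv_le_comm₀ hpos' (by positivity), inv_div]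
      linarith
  calc rexp ‖Complex.log (1 - r * z)‖
    _ ≤ rexp (log (4 / ‖1 - z‖) + π) := by
      gcongr
      refine (Complex.norm_le_abs_re_add_abs_im _).trans ?_
      rw [Complex.log_re, Complex.log_im]
      exact add_le_add abs_log_le (Complex.abs_arg_le_pi _)
    _ = 4 * rexp π / ‖1 - z‖ := by
      rw [exp_add, exp_log (by positivity), div_mul_eq_mul_div]

theorem measurable_log_one_sub_circleMap (r : ℝ) :
    Measurable fun θ ↦ Complex.log (1 - circleMap 0 r θ) :=
  Complex.measurable_log.comp (Continuous.measurable (by fun_prop))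

section

variable {E : Type*} [NormedAddCommGroup E] {f : ℂ → E} {C s : ℝ}

theorem norm_comp_log_one_sub_le (hs : 0 ≤ s) (hbound : ∀ w, ‖f w‖ ≤ C * rexp (s * ‖w‖))
    {z : ℂ} (hz : ‖z‖ ≤ 1) (hz1 : z ≠ 1) {r : ℝ} (hr : r ∈ Icc 0 1) :
    ‖f (Complex.log (1 - r * z))‖ ≤ C * (4 * rexp π) ^ s * ‖1 - z‖ ^ (-s) := by
  have hC : 0 ≤ C := by simpa using (norm_nonneg _).trans (hbound 0)
  calc ‖f (Complex.log (1 - r * z))‖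
    _ ≤ C * rexp ‖Complex.log (1 - r * z)‖ ^ s := by
      rw [← exp_mul, mul_comm _ s]
      exact hbound _
    _ ≤ C * (4 * rexp π / ‖1 - z‖) ^ s := by
      gcongr
      exact exp_norm_log_one_sub_le hz hz1 hr
    _ = C * (4 * rexp π) ^ s * ‖1 - z‖ ^ (-s) := by
      rw [div_rpow (by positivity) (norm_nonneg _), rpow_neg (norm_nonneg _)]
      ring

theorem circleIntegrable_comp_log_one_sub (hf : Continuous f) (hs : 0 ≤ s) (hs1 : s < 1)
    (hbound : ∀ w, ‖f w‖ ≤ C * rexp (s * ‖w‖)) :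
    CircleIntegrable (fun z ↦ f (Complex.log (1 - z))) 0 1 := by
  have dominated := (circleIntegrable_norm_one_sub_rpow (neg_lt_neg hs1)).const_mul
    (C * (4 * rexp π) ^ s)
  refine IntervalIntegrable.mono_fun' dominated ?_ (ae_restrict_of_ae ?_)
  · exact (hf.comp_aestronglyMeasurable (measurable_log_one_sub_circleMap 1).aestronglyMeasurable)
  · filter_upwards [ae_circleMap_ne one_ne_zero 1] with θ hθ
    simpa using norm_comp_log_one_sub_le hs hbound (by simp) hθ (right_mem_Icc.2 zero_le_one)

theorem tendsto_circleAverage_comp_log_one_sub [NormedSpace ℝ E] (hf : Continuous f) (hs : 0 ≤ s)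
    (hs1 : s < 1) (hbound : ∀ w, ‖f w‖ ≤ C * rexp (s * ‖w‖)) :
    Tendsto (circleAverage (fun z ↦ f (Complex.log (1 - z))) 0) (𝓝[<] 1)
      (𝓝 (circleAverage (fun z ↦ f (Complex.log (1 - z))) 0 1)) := by
  have scale (r θ : ℝ) : circleMap 0 r θ = r * circleMap 0 1 θ := by simp [circleMap_zero]
  have hIcc : ∀ᶠ r : ℝ in 𝓝[<] 1, r ∈ Icc 0 1 := by
    filter_upwards [Ioo_mem_nhdsLT zero_lt_one] with r hr using Ioo_subset_Icc_self hr
  refine (intervalIntegral.tendsto_integral_filter_of_dominated_convergence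
    (fun θ ↦ C * (4 * rexp π) ^ s * ‖1 - circleMap 0 1 θ‖ ^ (-s)) ?_ ?_
    ((circleIntegrable_norm_one_sub_rpow (neg_lt_neg hs1)).const_mul _) ?_).const_smul _
  · exact .of_forall fun r ↦
      hf.comp_aestronglyMeasurable (measurable_log_one_sub_circleMap r).aestronglyMeasurable
  · filter_upwards [hIcc] with r hr
    filter_upwards [ae_circleMap_ne one_ne_zero 1] with θ hθ _
    rw [scale]
    exact norm_comp_log_one_sub_le hs hbound (by simp) hθ hr
  · filter_upwards [ae_circleMap_ne one_ne_zero 1] with θ hθ _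
    have slit := one_sub_mem_slitPlane (norm_circleMap_zero 1 θ ▸ abs_one.le) hθ
    have radial : Continuous fun r : ℝ ↦ 1 - circleMap 0 r θ := by fun_prop [circleMap]
    exact ((hf.tendsto _).comp ((radial.tendsto 1).clog slit)).mono_left nhdsWithin_le_nhds

end

theorem pow_le_factorial_div_pow_mul_exp {x s : ℝ} (hx : 0 ≤ x) (hs : 0 < s) (k : ℕ) :
    x ^ k ≤ k ! / s ^ k * rexp (s * x) := by
  have h := pow_div_factorial_le_exp (s * x) (by positivity) k
  rw [div_le_iff₀ (by positivity), mul_pow] at h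
  rw [div_mul_eq_mul_div, le_div_iff₀ (by positivity)]
  linarith

theorem norm_pow_mul_conj_le (w : ℂ) (n : ℕ) {s : ℝ} (hs : 0 < s) :
    ‖w ^ n * conj w‖ ≤ (n + 1)! / s ^ (n + 1) * rexp (s * ‖w‖) := by
  rw [norm_mul, norm_pow, Complex.norm_conj, ← pow_succ]
  exact pow_le_factorial_div_pow_mul_exp (norm_nonneg w) hs (n + 1)

theorem circleIntegrable_log_one_sub_pow_mul_conj (n : ℕ) :
    CircleIntegrable (fun z ↦ Complex.log (1 - z) ^ n * conj (Complex.log (1 - z))) 0 1 :=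
  circleIntegrable_comp_log_one_sub (f := fun w ↦ w ^ n * conj w) (by fun_prop) one_half_pos.le
    one_half_lt_one fun w ↦ norm_pow_mul_conj_le w n one_half_pos

theorem circleAverage_log_one_sub_pow_mul_conj {n : ℕ} (hn : n ≠ 0) :
    circleAverage (fun z ↦ Complex.log (1 - z) ^ n * conj (Complex.log (1 - z))) 0 1 =
      (-1) ^ (n + 1) * n ! * riemannZeta (n + 1) := by
  have primitive_continuousWithinAt : Tendsto
      (fun u : ℝ ↦ ∫ t in (0 : ℝ)..u, Complex.log (1 - t) ^ n / t) (𝓝[Icc 0 1] 1)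
      (𝓝 (∫ t in (0 : ℝ)..1, Complex.log (1 - t) ^ n / t)) := by
    rw [← uIcc_of_le zero_le_one]
    exact intervalIntegral.continuousOn_primitive_interval'
      (intervalIntegrable_log_one_sub_pow_div hn) left_mem_uIcc 1 right_mem_uIcc
  have sq_tendsto : Tendsto (fun r : ℝ ↦ r ^ 2) (𝓝[<] 1) (𝓝[Icc 0 1] 1) := by
    refine tendsto_nhdsWithin_iff.2 ⟨?_, ?_⟩
    · exact ((continuous_pow 2).tendsto' 1 1 (one_pow 2)).mono_left nhdsWithin_le_nhds
    · filter_upwards [Ioo_mem_nhdsLT zero_lt_one] with r hr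
      exact ⟨sq_nonneg r, pow_le_one₀ hr.1.le hr.2.le⟩
  have inner_limit := (primitive_continuousWithinAt.comp sq_tendsto).neg
  have boundary_limit := tendsto_circleAverage_comp_log_one_sub (f := fun w ↦ w ^ n * conj w)
    (by fun_prop) one_half_pos.le one_half_lt_one
    fun w ↦ norm_pow_mul_conj_le w n one_half_pos
  rw [pow_succ', mul_assoc, mul_assoc, neg_one_mul, ← mul_assoc, ← integral_log_one_sub_pow_div hn]
  refine tendsto_nhds_unique boundary_limit (inner_limit.congr' ?_)
  filter_upwards [Ioo_mem_nhdsLT zero_lt_one] with r hr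
  refine (circleAverage_log_one_sub_pow_mul_conj_of_lt_one hn ?_).symm
  rw [abs_of_pos hr.1]
  exact hr.2

theorem re_log_pow_three_mul_conj (z : ℂ) :
    (Complex.log z ^ 3 * conj (Complex.log z)).re = log ‖z‖ ^ 4 - z.arg ^ 4 := by
  simp only [pow_succ, pow_zero, one_mul, Complex.mul_re, Complex.mul_im, Complex.conj_re,
    Complex.conj_im, Complex.log_re, Complex.log_im]
  ring

theorem circleIntegrable_log_norm_one_sub_pow_four_sub_arg_pow_four :
    CircleIntegrable (fun z ↦ log ‖1 - z‖ ^ 4 - (1 - z).arg ^ 4) 0 1 := by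
  simp_rw [← re_log_pow_three_mul_conj]
  have h := circleIntegrable_log_one_sub_pow_mul_conj 3
  exact ⟨h.1.re, h.2.re⟩

theorem circleAverage_log_norm_one_sub_pow_four_sub_arg_pow_four :
    circleAverage (fun z ↦ log ‖1 - z‖ ^ 4 - (1 - z).arg ^ 4) 0 1 = π ^ 4 / 15 := by
  simp_rw [← re_log_pow_three_mul_conj]
  have hzeta : (-1) ^ (3 + 1) * 3 ! * riemannZeta ((3 : ℕ) + 1) = (π ^ 4 / 15 : ℝ) := by
    norm_num [riemannZeta_four, Nat.factorial]
    ring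
  have h := Complex.reCLM.circleAverage_comp_comm (circleIntegrable_log_one_sub_pow_mul_conj 3)
  rwa [circleAverage_log_one_sub_pow_mul_conj three_ne_zero, hzeta] at h

theorem circleMap_two_pi_sub (R θ : ℝ) : circleMap 0 R (2 * π - θ) = conj (circleMap 0 R θ) := by
  rw [sub_eq_neg_add, periodic_circleMap 0 R]
  simp [circleMap_zero, ← Complex.exp_conj]

theorem circleAverage_of_conj_invariant {E : Type*} [NormedAddCommGroup E] [NormedSpace ℝ E]
    {f : ℂ → E} {R : ℝ} (hf : CircleIntegrable f 0 R) (hconj : ∀ z, f (conj z) = f z) :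
    circleAverage f 0 R = π⁻¹ • ∫ θ in (0 : ℝ)..π, f (circleMap 0 R θ) := by
  have hπ : π ∈ uIcc 0 (2 * π) := by
    rw [uIcc_of_le two_pi_pos.le]
    exact ⟨pi_pos.le, by linarith [pi_pos]⟩
  have reflect : ∫ θ in π..2 * π, f (circleMap 0 R θ) = ∫ θ in (0 : ℝ)..π, f (circleMap 0 R θ) := by
    have h := intervalIntegral.integral_comp_sub_left (a := 0) (b := π)
      (fun θ ↦ f (circleMap 0 R θ)) (2 * π)
    simp only [circleMap_two_pi_sub, hconj, sub_zero] at h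
    rw [h]
    ring_nf
  rw [circleAverage_def, ← intervalIntegral.integral_add_adjacent_intervals
    (hf.mono_set (uIcc_subset_uIcc_left hπ)) (hf.mono_set (uIcc_subset_uIcc_right hπ)), reflect,
    ← two_smul ℝ, smul_smul, mul_inv_rev, inv_mul_cancel_right₀ two_ne_zero]

theorem arg_conj_pow_of_even (z : ℂ) {n : ℕ} (hn : Even n) : (conj z).arg ^ n = z.arg ^ n := by
  rw [Complex.arg_conj]
  split_ifs with h
  · rw [h]
  · exact hn.neg_pow _

theorem integral_log_norm_one_sub_pow_four_sub_arg_pow_four :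
    ∫ θ in (0 : ℝ)..π, (log ‖1 - circleMap 0 1 θ‖ ^ 4 - (1 - circleMap 0 1 θ).arg ^ 4) =
      π ^ 5 / 15 := by
  have conj_invariant (z : ℂ) : log ‖1 - conj z‖ ^ 4 - (1 - conj z).arg ^ 4 =
      log ‖1 - z‖ ^ 4 - (1 - z).arg ^ 4 := by
    rw [← map_one conj, ← map_sub, Complex.norm_conj, arg_conj_pow_of_even _ (by decide), map_one]
  have h := circleAverage_of_conj_invariant
    circleIntegrable_log_norm_one_sub_pow_four_sub_arg_pow_four conj_invariant
  rw [circleAverage_log_norm_one_sub_pow_four_sub_arg_pow_four, eq_inv_smul_iff₀ pi_ne_zero] at h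
  rw [← h, smul_eq_mul]
  ring

theorem integral_sub_pi_div_two_pow_four :
    ∫ θ in (0 : ℝ)..π, ((θ - π) / 2) ^ 4 = π ^ 5 / 80 := by
  simp_rw [div_pow]
  rw [intervalIntegral.integral_div, intervalIntegral.integral_comp_sub_right (· ^ 4), integral_pow]
  norm_num
  ring

end

theorem ls5_pi : ∫ θ in (0:ℝ)..π, (Real.log (2 * Real.sin (θ/2)))^4 = 19/240 * π^5 := by
  have eq_add (θ : ℝ) (hθ : θ ∈ Set.Ioo 0 π) : log (2 * sin (θ / 2)) ^ 4 =
      (log ‖1 - circleMap 0 1 θ‖ ^ 4 - (1 - circleMap 0 1 θ).arg ^ 4) + ((θ - π) / 2) ^ 4 := by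
    rw [norm_one_sub_circleMap, log_abs, arg_one_sub_circleMap ⟨hθ.1, by linarith [hθ.1, hθ.2]⟩,
      sub_add_cancel]
  have integrable := circleIntegrable_log_norm_one_sub_pow_four_sub_arg_pow_four.mono_set
    (Set.uIcc_subset_uIcc_left (Set.mem_uIcc_of_le pi_pos.le (by linarith [pi_pos])))
  rw [intervalIntegral.integral_congr_Ioo_of_le pi_pos.le eq_add,
    intervalIntegral.integral_add integrable (Continuous.intervalIntegrable (by fun_prop) 0 π),
    integral_log_norm_one_sub_pow_four_sub_arg_pow_four, integral_sub_pi_div_two_pow_four]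
  ring
end

section
/- $\frac{2}{\pi}\int_0^\pi \mathrm{Re}\,\mathrm{Li}_2(4\sin^2\theta)\,d\theta = 2\zeta(2) = \frac{\pi^2}{3}$, where $\mathrm{Li}_2$ denotes the (analytically continued) dilogarithm and $\mathrm{Re}\,\mathrm{Li}_2$ its real part on $[0,\infty)$. -/
open Real

/-- The real part of the (analytically continued) dilogarithm on `[0, ∞)`:
for `x ≤ 1` it is the convergent series, and for `x > 1` it is given by the
functional equation `Re Li₂(x) = 2ζ(2) - Li₂(1/x) - (1/2) log² x`. -/
noncomputable def reLi2 (x : ℝ) : ℝ :=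
  if x ≤ 1 then ∑' n : ℕ, x^(n+1) / ((n:ℝ)+1)^2
  else π^2/3 - (∑' n : ℕ, (1/x)^(n+1) / ((n:ℝ)+1)^2) - (1/2) * (Real.log x)^2

/-!
Since `Re Li₂(x) = -∫₀ˣ log |1 - t| dt / t`, Fubini reduces the mean of `Re Li₂(c · 4 sin² θ)` over
`θ` to an integral over `0 ≤ u ≤ c` of the mean of `log |1 - 4 u sin² θ|`. Writing `u = s (1 - s)`
and `z = exp (2 i θ)`, one has `z (1 - 4 u sin² θ) = (s z + (1 - s)) ((1 - s) z + s)`, so Jensen's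
formula gives `2 log (max |s| |1 - s|)` for this mean. It equals `2 log s` with `1/2 ≤ s ≤ 1` if
`u ≤ 1/4`, and `log u` if `u ≥ 1/4`, where the roots `s` and `1 - s` are complex conjugates. The
remaining one-dimensional integral is elementary up to the value of `Li₂(1/2)`.
-/

open MeasureTheory Set Filter Topology Asymptotics

section Dilogarithm

variable {x : ℝ}

lemma hasSum_one_div_succ_sq : HasSum (fun n : ℕ => 1 / ((n : ℝ) + 1) ^ 2) (π ^ 2 / 6) := by
  simpa using (hasSum_nat_add_iff' 1).2 hasSum_zeta_two

lemma reLi2_of_le_one (hx : x ≤ 1) : reLi2 x = ∑' n : ℕ, x ^ (n + 1) / ((n : ℝ) + 1) ^ 2 :=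
  if_pos hx

lemma reLi2_zero : reLi2 0 = 0 := by simp [reLi2]

lemma reLi2_one : reLi2 1 = π ^ 2 / 6 := by
  simpa [reLi2] using hasSum_one_div_succ_sq.tsum_eq

lemma reLi2_add_reLi2_inv (hx : 0 < x) : reLi2 x + reLi2 x⁻¹ = π ^ 2 / 3 - log x ^ 2 / 2 := by
  have of_one_lt {y : ℝ} (hy : 1 < y) : reLi2 y + reLi2 y⁻¹ = π ^ 2 / 3 - log y ^ 2 / 2 := by
    rw [reLi2_of_le_one (inv_le_one_of_one_le₀ hy.le), reLi2, if_neg hy.not_ge, one_div y]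
    ring
  rcases lt_trichotomy x 1 with hx1 | rfl | hx1
  · have h := of_one_lt ((one_lt_inv₀ hx).2 hx1)
    rwa [inv_inv, log_inv, neg_sq, add_comm] at h
  · rw [inv_one, reLi2_one, log_one]
    ring
  · exact of_one_lt hx1

lemma continuousOn_reLi2_Icc : ContinuousOn reLi2 (Icc (-1) 1) := by
  refine ContinuousOn.congr ?_ fun x hx => reLi2_of_le_one hx.2
  refine continuousOn_tsum (fun n => by fun_prop) hasSum_one_div_succ_sq.summable fun n x hx => ?_
  rw [norm_div, norm_pow, norm_of_nonneg (by positivity : (0 : ℝ) ≤ ((n : ℝ) + 1) ^ 2)]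
  gcongr
  exact pow_le_one₀ (norm_nonneg x) (abs_le.2 hx)

lemma continuousOn_reLi2 : ContinuousOn reLi2 (Ici (-1)) := by
  rw [← Icc_union_Ici_eq_Ici (by norm_num : (-1 : ℝ) ≤ 1)]
  refine continuousOn_reLi2_Icc.union_of_isClosed ?_ isClosed_Icc isClosed_Ici
  have hpos : ∀ x ∈ Ici (1 : ℝ), 0 < x := fun x hx => zero_lt_one.trans_le hx
  have hinv : ContinuousOn (fun x => reLi2 x⁻¹) (Ici 1) :=
    continuousOn_reLi2_Icc.comp (continuousOn_inv₀.mono fun x hx => (hpos x hx).ne') fun x hx =>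
      ⟨by linarith [inv_pos.2 (hpos x hx)], inv_le_one_of_one_le₀ hx⟩
  have hlog : ContinuousOn log (Ici 1) := continuousOn_log.mono fun x hx => (hpos x hx).ne'
  exact ((continuousOn_const.sub ((hlog.pow 2).div_const 2)).sub hinv).congr fun x hx =>
    eq_sub_of_add_eq (reLi2_add_reLi2_inv (hpos x hx))

lemma hasDerivAt_tsum_pow_div_succ_sq (hx : |x| < 1) :
    HasDerivAt (fun x : ℝ => ∑' n : ℕ, x ^ (n + 1) / ((n : ℝ) + 1) ^ 2)
      (∑' n : ℕ, x ^ n / ((n : ℝ) + 1)) x := by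
  obtain ⟨r, hxr, hr1⟩ := exists_between hx
  have hr0 : 0 < r := (abs_nonneg x).trans_lt hxr
  refine hasDerivAt_tsum_of_isPreconnected (t := Ioo (-r) r) (y₀ := 0)
    (g := fun (n : ℕ) (x : ℝ) => x ^ (n + 1) / ((n : ℝ) + 1) ^ 2)
    (g' := fun (n : ℕ) (x : ℝ) => x ^ n / ((n : ℝ) + 1))
    (summable_geometric_of_lt_one hr0.le hr1) isOpen_Ioo isPreconnected_Ioo ?_ ?_
    (by simpa using hr0) (by simp [summable_zero]) (abs_lt.1 hxr)
  · intro n y _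
    refine ((hasDerivAt_pow (n + 1) y).div_const (((n : ℝ) + 1) ^ 2)).congr_deriv ?_
    push_cast
    field_simp
  · intro n y hy
    rw [norm_div, norm_pow, norm_of_nonneg (by positivity : (0 : ℝ) ≤ (n : ℝ) + 1)]
    calc ‖y‖ ^ n / ((n : ℝ) + 1) ≤ ‖y‖ ^ n :=
          div_le_self (by positivity) (le_add_of_nonneg_left n.cast_nonneg)
      _ ≤ r ^ n := pow_le_pow_left₀ (norm_nonneg y) (abs_lt.2 hy).le n

lemma hasDerivAt_reLi2_of_abs_lt_one (hx : |x| < 1) (hx0 : x ≠ 0) :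
    HasDerivAt reLi2 (-log (1 - x) / x) x := by
  have hsum : ∑' n : ℕ, x ^ n / ((n : ℝ) + 1) = -log (1 - x) / x := by
    rw [← (hasSum_pow_div_log_of_abs_lt_one hx).tsum_eq, ← tsum_div_const]
    congr 1 with n
    field_simp
    ring
  rw [← hsum]
  refine (hasDerivAt_tsum_pow_div_succ_sq hx).congr_of_eventuallyEq ?_
  filter_upwards [Iio_mem_nhds (abs_lt.1 hx).2] with y hy using reLi2_of_le_one (le_of_lt hy)

lemma hasDerivAt_reLi2_of_one_lt (hx : 1 < x) : HasDerivAt reLi2 (-log (1 - x) / x) x := by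
  have hx0 : 0 < x := zero_lt_one.trans hx
  have hlog : log (1 - x⁻¹) = log (1 - x) - log x := by
    rw [← log_div (by linarith) hx0.ne', ← log_neg_eq_log]
    congr 1
    field_simp
    ring
  have hinv : |x⁻¹| < 1 := by
    rw [abs_of_pos (inv_pos.2 hx0)]
    exact inv_lt_one_of_one_lt₀ hx
  have h := ((((hasDerivAt_log hx0.ne').pow 2).div_const 2).const_sub (π ^ 2 / 3)).sub
    ((hasDerivAt_reLi2_of_abs_lt_one hinv (inv_ne_zero hx0.ne')).comp x (hasDerivAt_inv hx0.ne'))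
  refine (h.congr_of_eventuallyEq ?_).congr_deriv ?_
  · filter_upwards [Ioi_mem_nhds hx0] with y hy
      using eq_sub_of_add_eq (reLi2_add_reLi2_inv hy)
  · rw [hlog]
    field_simp
    norm_num
    ring

lemma hasDerivAt_reLi2 (hx : -1 < x) (hx0 : x ≠ 0) (hx1 : x ≠ 1) :
    HasDerivAt reLi2 (-log (1 - x) / x) x := by
  rcases hx1.lt_or_gt with h | h
  · exact hasDerivAt_reLi2_of_abs_lt_one (abs_lt.2 ⟨hx, h⟩) hx0
  · exact hasDerivAt_reLi2_of_one_lt h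

lemma continuousAt_log_mul_log_one_sub_zero :
    ContinuousAt (fun x => log x * log (1 - x)) 0 := by
  have hderiv : HasDerivAt (fun x => log (1 - x)) (-1 / (1 - 0)) 0 :=
    ((hasDerivAt_id (0 : ℝ)).const_sub 1).log (by norm_num)
  have hO : (fun x => log (1 - x)) =O[𝓝 0] fun x => x := by
    simpa using hderiv.isBigO_sub
  have hlim : Tendsto (fun x => log x * x) (𝓝 0) (𝓝 0) := by
    simpa [mul_comm] using continuous_mul_log.tendsto 0
  simpa [ContinuousAt] using ((isBigO_refl log (𝓝 0)).mul hO).trans_tendsto hlim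

lemma continuous_log_mul_log_one_sub : Continuous fun x => log x * log (1 - x) := by
  refine continuous_iff_continuousAt.2 fun x => ?_
  rcases eq_or_ne x 0 with rfl | hx0
  · exact continuousAt_log_mul_log_one_sub_zero
  rcases eq_or_ne x 1 with rfl | hx1
  · have h : ContinuousAt (fun x : ℝ => 1 - x) 1 := by fun_prop
    simpa [Function.comp_def, mul_comm] using
      ContinuousAt.comp_of_eq continuousAt_log_mul_log_one_sub_zero h (sub_self 1)
  · exact (continuousAt_log hx0).mul
      (ContinuousAt.log (by fun_prop) (sub_ne_zero.2 hx1.symm))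

lemma reLi2_add_reLi2_one_sub (hx : x ∈ Icc 0 1) :
    reLi2 x + reLi2 (1 - x) = π ^ 2 / 6 - log x * log (1 - x) := by
  have hcont : ContinuousOn (fun t => reLi2 t + reLi2 (1 - t) + log t * log (1 - t))
      (Icc 0 x) := by
    refine ContinuousOn.add (ContinuousOn.add ?_ ?_) continuous_log_mul_log_one_sub.continuousOn
    · exact continuousOn_reLi2.mono fun t ht => by simpa using by linarith [ht.1]
    · exact continuousOn_reLi2.comp (by fun_prop) fun t ht => by
        simpa using by linarith [ht.2, hx.2]
  have hderiv : ∀ t ∈ Ioo 0 x,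
      HasDerivAt (fun t => reLi2 t + reLi2 (1 - t) + log t * log (1 - t)) 0 t := by
    intro t ht
    have ht1 : t < 1 := ht.2.trans_le hx.2
    have hne : 1 - t ≠ 0 := by linarith
    have hsub := (hasDerivAt_id t).const_sub 1
    have d₁ := hasDerivAt_reLi2 (by linarith [ht.1]) ht.1.ne' ht1.ne
    have d₂ := (hasDerivAt_reLi2 (by linarith) hne (by linarith [ht.1])).comp t hsub
    have d₃ := (hasDerivAt_log ht.1.ne').mul (hsub.log hne)
    refine ((d₁.add d₂).add d₃).congr_deriv ?_
    simp only [id, sub_sub_cancel]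
    ring
  have h := intervalIntegral.integral_eq_sub_of_hasDerivAt_of_le hx.1 hcont hderiv
    intervalIntegrable_const
  simp only [intervalIntegral.integral_zero, sub_zero, reLi2_zero, reLi2_one, log_one,
    mul_zero] at h
  linarith

lemma reLi2_one_half : reLi2 (1 / 2) = π ^ 2 / 12 - log 2 ^ 2 / 2 := by
  have h := reLi2_add_reLi2_one_sub (x := 1 / 2) (by norm_num)
  have hhalf : (1 : ℝ) - 1 / 2 = 1 / 2 := by norm_num
  have hlog : log (1 / 2) = -log 2 := by rw [one_div, log_inv]
  rw [hhalf, hlog] at h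
  linarith

end Dilogarithm

section IntegralRepresentation

variable {x y : ℝ}

lemma intervalIntegrable_log_one_sub_div (hx : 0 ≤ x) :
    IntervalIntegrable (fun t => -log (1 - t) / t) volume 0 x := by
  have zero_one : IntervalIntegrable (fun t => -log (1 - t) / t) volume 0 1 := by
    refine intervalIntegral.intervalIntegrable_deriv_of_nonneg (g := reLi2) ?_ ?_ ?_
    · exact continuousOn_reLi2_Icc.mono (by simp [uIcc_of_le, Icc_subset_Icc_left])
    all_goals
      intro t ht
      rw [min_eq_left zero_le_one, max_eq_right zero_le_one] at ht
    · exact hasDerivAt_reLi2 (by linarith [ht.1]) ht.1.ne' ht.2.ne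
    · exact div_nonneg (neg_nonneg.2 (log_nonpos (by linarith [ht.2]) (by linarith [ht.1]))) ht.1.le
  rcases le_total x 1 with hx1 | hx1
  · exact zero_one.mono_set (uIcc_subset_uIcc_left ⟨by simpa using hx, by simpa using hx1⟩)
  · refine zero_one.trans ?_
    have hlog : IntervalIntegrable (fun t => log (1 - t)) volume 1 x := by
      simpa using
        (intervalIntegral.intervalIntegrable_log' (a := 0) (b := 1 - x)).comp_sub_left 1
    refine hlog.neg.mul_continuousOn (continuousOn_inv₀.mono fun t ht => ?_)
    rw [uIcc_of_le hx1] at ht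
    exact (zero_lt_one.trans_le ht.1).ne'

lemma integral_log_one_sub_div (hx : 0 ≤ x) : ∫ t in 0..x, -log (1 - t) / t = reLi2 x := by
  rw [integral_eq_of_hasDerivAt_off_countable_of_le reLi2 _ hx (countable_singleton 1)
    (continuousOn_reLi2.mono fun t ht => by simpa using by linarith [ht.1])
    (fun t ht => hasDerivAt_reLi2 (by linarith [ht.1.1]) ht.1.1.ne' ht.2)
    (intervalIntegrable_log_one_sub_div hx), reLi2_zero, sub_zero]

lemma log_one_sub_mul_div (u y : ℝ) :
    -log (1 - u * y) / u = y * (-log (1 - u * y) / (u * y)) := by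
  rcases eq_or_ne y 0 with rfl | hy
  · simp
  · field_simp

lemma integral_log_one_sub_mul_div (hxy : 0 ≤ x * y) :
    ∫ u in 0..x, -log (1 - u * y) / u = reLi2 (x * y) := by
  simp_rw [log_one_sub_mul_div _ y]
  rw [intervalIntegral.integral_const_mul, ← smul_eq_mul,
    intervalIntegral.smul_integral_comp_mul_right (fun t => -log (1 - t) / t), zero_mul,
    integral_log_one_sub_div hxy]

lemma integral_norm_log_one_sub_mul_div (hy : 0 ≤ y) :
    ∫ u in 0..x, ‖-log (1 - u * y) / u‖ = ∫ t in 0..x * y, ‖-log (1 - t) / t‖ := by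
  simp_rw [log_one_sub_mul_div _ y, norm_mul, norm_of_nonneg hy]
  rw [intervalIntegral.integral_const_mul, ← smul_eq_mul,
    intervalIntegral.smul_integral_comp_mul_right (fun t => ‖-log (1 - t) / t‖), zero_mul]

lemma intervalIntegrable_log_one_sub_mul_div (hxy : 0 ≤ x * y) :
    IntervalIntegrable (fun u => -log (1 - u * y) / u) volume 0 x := by
  rcases eq_or_ne y 0 with rfl | hy
  · simp
  have h := (intervalIntegrable_log_one_sub_div hxy).comp_mul_right (c := y)
  rw [zero_div, mul_div_cancel_right₀ x hy] at h
  simp_rw [log_one_sub_mul_div _ y]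
  exact h.const_mul y

end IntegralRepresentation

section Fubini

variable {α : Type*} [MeasurableSpace α] {μ : Measure α} [IsFiniteMeasure μ] {f : α → ℝ} {b c : ℝ}

lemma integrable_log_one_sub_mul_div_prod (hf : Measurable f) (hfb : ∀ a, f a ∈ Icc 0 b)
    (hc : 0 ≤ c) :
    Integrable (fun p : α × ℝ => -log (1 - p.2 * f p.1) / p.2)
      (μ.prod (volume.restrict (Ioc 0 c))) := by
  have hmeas : AEStronglyMeasurable (fun p : α × ℝ => -log (1 - p.2 * f p.1) / p.2)
      (μ.prod (volume.restrict (Ioc 0 c))) :=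
    Measurable.aestronglyMeasurable (by fun_prop)
  refine (integrable_prod_iff hmeas).2 ⟨.of_forall fun a => ?_, ?_⟩
  · exact (intervalIntegrable_iff_integrableOn_Ioc_of_le hc).1
      (intervalIntegrable_log_one_sub_mul_div (mul_nonneg hc (hfb a).1))
  · refine Integrable.of_bound hmeas.norm.integral_prod_right'
      (∫ t in 0..c * b, ‖-log (1 - t) / t‖) (.of_forall fun a => ?_)
    obtain ⟨h0, hb⟩ := hfb a
    have hle : c * f a ≤ c * b := mul_le_mul_of_nonneg_left hb hc
    have hnonneg : 0 ≤ c * f a := mul_nonneg hc h0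
    rw [← intervalIntegral.integral_of_le hc, integral_norm_log_one_sub_mul_div h0,
      norm_of_nonneg (intervalIntegral.integral_nonneg hnonneg fun _ _ => norm_nonneg _)]
    exact intervalIntegral.integral_mono_interval le_rfl hnonneg hle
      (.of_forall fun _ => norm_nonneg _)
      (intervalIntegrable_log_one_sub_div (hnonneg.trans hle)).norm

lemma intervalIntegrable_integral_log_one_sub_mul_div (hf : Measurable f)
    (hfb : ∀ a, f a ∈ Icc 0 b) (hc : 0 ≤ c) :
    IntervalIntegrable (fun u => -(∫ a, log (1 - u * f a) ∂μ) / u) volume 0 c := by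
  rw [intervalIntegrable_iff_integrableOn_Ioc_of_le hc]
  simpa only [IntegrableOn, integral_div, integral_neg] using
    (integrable_log_one_sub_mul_div_prod (μ := μ) hf hfb hc).integral_prod_right

lemma integral_reLi2_mul (hf : Measurable f) (hfb : ∀ a, f a ∈ Icc 0 b) (hc : 0 ≤ c) :
    ∫ a, reLi2 (c * f a) ∂μ = ∫ u in 0..c, -(∫ a, log (1 - u * f a) ∂μ) / u := by
  simp_rw [← fun a => integral_log_one_sub_mul_div (mul_nonneg hc (hfb a).1),
    intervalIntegral.integral_of_le hc]
  rw [integral_integral_swap (integrable_log_one_sub_mul_div_prod hf hfb hc)]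
  simp_rw [integral_div, integral_neg]

end Fubini

section Jensen

open Polynomial

lemma circleAverage_zero_one_eq_integral_exp (f : ℂ → ℝ) :
    circleAverage f 0 1 = π⁻¹ * ∫ θ in 0..π, f (Complex.exp (θ * Complex.I) ^ 2) := by
  have hexp (θ : ℝ) : Complex.exp (θ * Complex.I) ^ 2 = circleMap 0 1 (θ * 2) := by
    rw [← Complex.exp_nat_mul, circleMap_zero]
    push_cast
    ring_nf
  have h := intervalIntegral.smul_integral_comp_mul_right (a := 0) (b := π)
    (fun θ : ℝ => f (circleMap 0 1 θ)) 2
  simp_rw [hexp]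
  rw [zero_mul] at h
  rw [circleAverage_def, mul_comm 2 π, ← h, smul_eq_mul, smul_eq_mul, mul_inv, mul_assoc,
    inv_mul_cancel_left₀ two_ne_zero]

lemma mahlerMeasure_C_mul_X_add_C_eq_max (a b : ℂ) :
    (C a * X + C b).mahlerMeasure = max ‖a‖ ‖b‖ := by
  rcases eq_or_ne a 0 with rfl | ha
  · simp
  · exact mahlerMeasure_C_mul_X_add_C ha b

lemma logMahlerMeasure_palindromic_quadratic (a b : ℂ) :
    ((C a * X + C b) * (C b * X + C a)).logMahlerMeasure = 2 * log (max ‖a‖ ‖b‖) := by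
  rw [logMahlerMeasure_eq_log_MahlerMeasure, mahlerMeasure_mul,
    mahlerMeasure_C_mul_X_add_C_eq_max, mahlerMeasure_C_mul_X_add_C_eq_max, max_comm ‖b‖, ← sq,
    log_pow, Nat.cast_ofNat]

lemma integral_log_norm_one_sub_mul_sin_sq (s : ℂ) :
    ∫ θ in 0..π, log ‖1 - s * (1 - s) * (4 * Complex.sin θ ^ 2)‖ =
      2 * π * log (max ‖s‖ ‖1 - s‖) := by
  have heval (θ : ℝ) :
      ‖((C s * X + C (1 - s)) * (C (1 - s) * X + C s)).eval (Complex.exp (θ * Complex.I) ^ 2)‖ =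
        ‖1 - s * (1 - s) * (4 * Complex.sin θ ^ 2)‖ := by
    have hw : ‖Complex.exp (θ * Complex.I) ^ 2‖ = 1 := by
      rw [norm_pow, Complex.norm_exp_ofReal_mul_I, one_pow]
    have hsin : Complex.exp (θ * Complex.I) ^ 2 * (4 * Complex.sin θ ^ 2) =
        -(Complex.exp (θ * Complex.I) ^ 2 - 1) ^ 2 := by
      have hw0 := Complex.exp_ne_zero (θ * Complex.I)
      rw [Complex.sin, neg_mul, Complex.exp_neg]
      generalize Complex.exp (θ * Complex.I) = w at hw0 ⊢
      field_simp
      rw [Complex.I_sq]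
      ring
    rw [← one_mul ‖1 - _‖, ← hw, ← norm_mul]
    congr 1
    simp only [eval_mul, eval_add, eval_C, eval_X]
    linear_combination s * (1 - s) * hsin
  have h := circleAverage_zero_one_eq_integral_exp
    fun z => log ‖((C s * X + C (1 - s)) * (C (1 - s) * X + C s)).eval z‖
  rw [← logMahlerMeasure_def, logMahlerMeasure_palindromic_quadratic] at h
  simp_rw [heval] at h
  rw [eq_inv_mul_iff_mul_eq₀ pi_ne_zero] at h
  linarith

/-- The integral `∫₀^π log |1 - 4 u sin² θ| dθ`, the inner integral after Fubini; `Real.log` already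
takes the absolute value of its argument. -/
noncomputable def logSinSqIntegral (u : ℝ) : ℝ := ∫ θ in 0..π, log (1 - u * (4 * sin θ ^ 2))

lemma logSinSqIntegral_eq_of_complex {s : ℂ} {u : ℝ} (h : s * (1 - s) = u) :
    logSinSqIntegral u = 2 * π * log (max ‖s‖ ‖1 - s‖) := by
  rw [← integral_log_norm_one_sub_mul_sin_sq, h, logSinSqIntegral]
  congr 1 with θ
  rw [← log_abs, ← norm_eq_abs, ← Complex.norm_real]
  push_cast
  rfl

lemma logSinSqIntegral_mul_one_sub {s : ℝ} (hs : 1 / 2 ≤ s) :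
    logSinSqIntegral (s * (1 - s)) = 2 * π * log s := by
  rw [logSinSqIntegral_eq_of_complex (s := s) (by push_cast; rfl), ← Complex.ofReal_one,
    ← Complex.ofReal_sub, Complex.norm_real, Complex.norm_real,
    norm_of_nonneg (by linarith : 0 ≤ s), max_eq_left]
  exact abs_le.2 ⟨by linarith, by linarith⟩

lemma logSinSqIntegral_of_quarter_le {u : ℝ} (hu : 1 / 4 ≤ u) :
    logSinSqIntegral u = π * log u := by
  set s : ℂ := ⟨1 / 2, √(u - 1 / 4)⟩ with hs
  have hconj : 1 - s = starRingEnd ℂ s := by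
    apply Complex.ext <;> norm_num [hs]
  have hnormSq : Complex.normSq s = u := by
    rw [Complex.normSq_mk, mul_self_sqrt (by linarith)]
    ring
  rw [logSinSqIntegral_eq_of_complex (s := s) (by rw [hconj, Complex.mul_conj, hnormSq]), hconj,
    RCLike.norm_conj, max_self, Complex.norm_def, hnormSq, log_sqrt (by linarith)]
  ring

end Jensen

lemma hasDerivAt_log_sq_sub_two_mul_reLi2_one_sub {s : ℝ} (hs : s ∈ Ioo 0 1) :
    HasDerivAt (fun s => log s ^ 2 - 2 * reLi2 (1 - s))
      (2 * log s * (1 - 2 * s) / (s * (1 - s))) s := by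
  have hs0 : s ≠ 0 := hs.1.ne'
  have hs1 : 1 - s ≠ 0 := by linarith [hs.2]
  have hLi := (hasDerivAt_reLi2 (by linarith [hs.2]) hs1 (by linarith [hs.1])).comp s
    ((hasDerivAt_id s).const_sub 1)
  refine (((hasDerivAt_log hs0).pow 2).sub (hLi.const_mul 2)).congr_deriv ?_
  rw [sub_sub_cancel]
  field_simp
  norm_num
  ring

lemma integral_log_mul_one_sub_two_mul_div :
    ∫ s in (1 / 2 : ℝ)..1, 2 * log s * (1 - 2 * s) / (s * (1 - s)) = π ^ 2 / 6 - 2 * log 2 ^ 2 := by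
  have hle : (1 / 2 : ℝ) ≤ 1 := by norm_num
  have hcont : ContinuousOn (fun s => log s ^ 2 - 2 * reLi2 (1 - s)) (Icc (1 / 2) 1) :=
    ((continuousOn_log.mono fun s hs => by simpa using by linarith [hs.1]).pow 2).sub
      (continuousOn_const.mul (continuousOn_reLi2.comp (by fun_prop) fun s hs => by
        simpa using by linarith [hs.2]))
  have hderiv : ∀ s ∈ Ioo (1 / 2 : ℝ) 1, HasDerivAt (fun s => log s ^ 2 - 2 * reLi2 (1 - s))
      (2 * log s * (1 - 2 * s) / (s * (1 - s))) s := fun s hs =>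
    hasDerivAt_log_sq_sub_two_mul_reLi2_one_sub ⟨by linarith [hs.1], hs.2⟩
  have hnonneg : ∀ s ∈ Ioo (1 / 2 : ℝ) 1, 0 ≤ 2 * log s * (1 - 2 * s) / (s * (1 - s)) := by
    intro s hs
    have hs0 : 0 < s := by linarith [hs.1]
    refine div_nonneg (mul_nonneg_of_nonpos_of_nonpos ?_ (by linarith [hs.1]))
      (mul_nonneg hs0.le (by linarith [hs.2]))
    linarith [log_nonpos hs0.le hs.2.le]
  have hint := intervalIntegral.intervalIntegrable_deriv_of_nonneg
    (by rwa [uIcc_of_le hle]) (by rwa [min_eq_left hle, max_eq_right hle])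
    (by rwa [min_eq_left hle, max_eq_right hle])
  have hhalf : (1 : ℝ) - 1 / 2 = 1 / 2 := by norm_num
  rw [intervalIntegral.integral_eq_sub_of_hasDerivAt_of_le hle hcont hderiv hint, hhalf, sub_self,
    log_one, reLi2_zero, reLi2_one_half, one_div, log_inv]
  ring

lemma integral_logSinSqIntegral_div_zero_quarter :
    ∫ u in (0 : ℝ)..1 / 4, -logSinSqIntegral u / u = π * (π ^ 2 / 6 - 2 * log 2 ^ 2) := by
  have hle : (1 / 2 : ℝ) ≤ 1 := by norm_num
  have hsubst := intervalIntegral.integral_comp_mul_deriv_of_deriv_nonpos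
    (f := fun s : ℝ => s * (1 - s)) (f' := fun s => 1 - 2 * s) (a := 1 / 2) (b := 1)
    (g := fun u => -logSinSqIntegral u / u) (by fun_prop)
    (fun s _ => (((hasDerivAt_id s).mul ((hasDerivAt_id s).const_sub 1)).congr_deriv (by
      simp only [id]; ring)))
    (fun s hs => by rw [min_eq_left hle] at hs; linarith [hs.1])
  have hquarter : (1 / 2 : ℝ) * (1 - 1 / 2) = 1 / 4 := by norm_num
  rw [hquarter, sub_self, mul_zero, intervalIntegral.integral_symm 0] at hsubst
  rw [← neg_eq_iff_eq_neg.2 hsubst, ← integral_log_mul_one_sub_two_mul_div,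
    ← intervalIntegral.integral_const_mul, ← intervalIntegral.integral_neg]
  refine intervalIntegral.integral_congr fun s hs => ?_
  rw [uIcc_of_le hle] at hs
  simp only [Function.comp_apply, logSinSqIntegral_mul_one_sub hs.1]
  ring

lemma integral_neg_log_div {a b : ℝ} (ha : 0 < a) (hb : 0 < b) :
    ∫ u in a..b, -log u / u = (log a ^ 2 - log b ^ 2) / 2 := by
  have hne : ∀ u ∈ uIcc a b, u ≠ 0 := fun u hu => ((lt_min ha hb).trans_le hu.1).ne'
  rw [intervalIntegral.integral_eq_sub_of_hasDerivAt (f := fun u => -(log u ^ 2) / 2)]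
  · ring
  · intro u hu
    refine (((hasDerivAt_log (hne u hu)).pow 2).neg.div_const 2).congr_deriv ?_
    have := hne u hu
    field_simp
    norm_num
  · exact ((continuousOn_log.mono hne).neg.div continuousOn_id hne).intervalIntegrable

lemma integral_logSinSqIntegral_div_quarter {c : ℝ} (hc : 1 / 4 ≤ c) :
    ∫ u in (1 / 4 : ℝ)..c, -logSinSqIntegral u / u = π * (2 * log 2 ^ 2 - log c ^ 2 / 2) := by
  have hlog : log (1 / 4) = -(2 * log 2) := by
    rw [one_div, log_inv, show (4 : ℝ) = 2 ^ 2 by norm_num, log_pow, Nat.cast_ofNat]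
  calc ∫ u in (1 / 4 : ℝ)..c, -logSinSqIntegral u / u
      = ∫ u in (1 / 4 : ℝ)..c, π * (-log u / u) := by
        refine intervalIntegral.integral_congr fun u hu => ?_
        rw [uIcc_of_le hc] at hu
        simp only [logSinSqIntegral_of_quarter_le hu.1]
        ring
    _ = π * (2 * log 2 ^ 2 - log c ^ 2 / 2) := by
        rw [intervalIntegral.integral_const_mul,
          integral_neg_log_div (by norm_num) (by linarith), hlog]
        ring

lemma four_mul_sin_sq_mem_Icc (θ : ℝ) : 4 * sin θ ^ 2 ∈ Icc (0 : ℝ) 4 :=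
  ⟨by positivity, by linarith [sin_sq_le_one θ]⟩

lemma intervalIntegrable_logSinSqIntegral_div {c : ℝ} (hc : 0 ≤ c) :
    IntervalIntegrable (fun u => -logSinSqIntegral u / u) volume 0 c := by
  simpa only [logSinSqIntegral, intervalIntegral.integral_of_le pi_pos.le] using
    intervalIntegrable_integral_log_one_sub_mul_div (μ := volume.restrict (Ioc 0 π))
      (f := fun θ => 4 * sin θ ^ 2) (by fun_prop) four_mul_sin_sq_mem_Icc hc

lemma integral_reLi2_mul_sin_sq {c : ℝ} (hc : 0 ≤ c) :
    ∫ θ in 0..π, reLi2 (c * (4 * sin θ ^ 2)) = ∫ u in 0..c, -logSinSqIntegral u / u := by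
  simp only [logSinSqIntegral, intervalIntegral.integral_of_le pi_pos.le]
  exact integral_reLi2_mul (f := fun θ => 4 * sin θ ^ 2) (by fun_prop) four_mul_sin_sq_mem_Icc hc

theorem dilog_integral_eval_general {c : ℝ} (hc : 1 / 4 ≤ c) :
    (2 / π) * ∫ θ in 0..π, reLi2 (c * (4 * sin θ ^ 2)) = π ^ 2 / 3 - log c ^ 2 := by
  have hc0 : 0 ≤ c := by linarith
  have hint := intervalIntegrable_logSinSqIntegral_div hc0
  have hmem : (1 / 4 : ℝ) ∈ uIcc 0 c := by
    rw [uIcc_of_le hc0]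
    exact ⟨by norm_num, hc⟩
  rw [integral_reLi2_mul_sin_sq hc0, ← intervalIntegral.integral_add_adjacent_intervals
    (hint.mono_set (uIcc_subset_uIcc_left hmem)) (hint.mono_set (uIcc_subset_uIcc_right hmem)),
    integral_logSinSqIntegral_div_zero_quarter, integral_logSinSqIntegral_div_quarter hc]
  field_simp
  ring

theorem dilog_integral_eval :
    (2/π) * ∫ θ in (0:ℝ)..π, reLi2 (4 * (Real.sin θ)^2) = π^2 / 3 := by
  simpa using dilog_integral_eval_general (c := 1) (by norm_num)
end
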